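/- Let U := { x ∈ ℤ_p^{r_A} : Δ_r(x) ≠ 0 } (so U = ℤ_p^{r_A} if r = 0); on U every Δ_i(x) with 0 ≤ i ≤ r is nonzero, and U has full Haar measure. For real s > 0 define Z(s) := ∫_{ℤ_p^{r_A} × ℤ_p^{r_B}} ‖θ(a)·b‖^s dμ(a,b), with the convention 0^s := 0. Then Z(s) = 1 − Σ_{i=0}^{r} [ p^{−i}·(1 − p^{−s}) / (1 − p^{−(s+i)}) ] · ∫_U ( (‖Δ_i(x)‖/‖Δ_{i−1}(x)‖)^{s+i} − (‖Δ_{i+1}(x)‖/‖Δ_i(x)‖)^{s+i} ) · ‖Δ_i(x)‖^{−1} dμ(x), where by convention ‖Δ_{−1}(x)‖ = ‖Δ_0(x)‖ = 1 and ‖Δ_{r+1}(x)‖ = 0. -/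

import Mathlib

open MeasureTheory

noncomputable instance (p : ℕ) [Fact p.Prime] : MeasurableSpace ℤ_[p] := borel _
instance (p : ℕ) [Fact p.Prime] : BorelSpace ℤ_[p] := ⟨rfl⟩

/-- The Haar probability measure on the compact additive group `ℤ_p`. -/
noncomputable def padicHaar (p : ℕ) [Fact p.Prime] : Measure ℤ_[p] :=
  Measure.addHaarMeasure ⟨⟨Set.univ, isCompact_univ⟩, by simp⟩

/-- The Haar probability measure on `ℤ_p^N` (product of the Haar probability measures on
the factors). -/
noncomputable def padicHaarPi (p : ℕ) [Fact p.Prime] (N : ℕ) :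
    Measure (Fin N → ℤ_[p]) :=
  Measure.pi fun _ => padicHaar p

/-- `‖Δ_i(A)‖`: the maximum of the `p`-adic absolute values of all `i × i` minors of the
matrix `A` (with the conventions `‖Δ_0(A)‖ = 1`, and `‖Δ_i(A)‖ = 0` when `i` exceeds the
size of `A`). -/
noncomputable def minorNorm {p : ℕ} [Fact p.Prime] {m n : ℕ}
    (A : Matrix (Fin m) (Fin n) ℤ_[p]) (i : ℕ) : ℝ :=
  ⨆ ρ : (Fin i → Fin m) × (Fin i → Fin n), ‖(A.submatrix ρ.1 ρ.2).det‖

theorem minorNorm_le {p : ℕ} [Fact p.Prime] {m n : ℕ} {A : Matrix (Fin m) (Fin n) ℤ_[p]}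
    {i : ℕ} {c : ℝ} (hc : 0 ≤ c)
    (h : ∀ f g, ‖(A.submatrix f g : Matrix (Fin i) (Fin i) ℤ_[p]).det‖ ≤ c) :
    minorNorm A i ≤ c :=
  Real.iSup_le (fun ρ => h ρ.1 ρ.2) hc

theorem norm_det_submatrix_le_minorNorm {p : ℕ} [Fact p.Prime] {m n : ℕ}
    (A : Matrix (Fin m) (Fin n) ℤ_[p]) {i : ℕ} (f : Fin i → Fin m) (g : Fin i → Fin n) :
    ‖(A.submatrix f g).det‖ ≤ minorNorm A i :=
  le_ciSup (f := fun ρ : (Fin i → Fin m) × (Fin i → Fin n) => ‖(A.submatrix ρ.1 ρ.2).det‖)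
    (Set.finite_range _).bddAbove (f, g)

theorem minorNorm_nonneg {p : ℕ} [Fact p.Prime] {m n : ℕ}
    (A : Matrix (Fin m) (Fin n) ℤ_[p]) (i : ℕ) : 0 ≤ minorNorm A i :=
  Real.iSup_nonneg fun _ => norm_nonneg _

theorem minorNorm_transpose {p : ℕ} [Fact p.Prime] {m n : ℕ}
    (A : Matrix (Fin m) (Fin n) ℤ_[p]) (i : ℕ) : minorNorm A.transpose i = minorNorm A i := by
  apply le_antisymm <;> refine minorNorm_le (minorNorm_nonneg _ _) fun f g => ?_
  · rw [← Matrix.transpose_submatrix, Matrix.det_transpose]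
    exact norm_det_submatrix_le_minorNorm A g f
  · rw [← Matrix.det_transpose, Matrix.transpose_submatrix]
    exact norm_det_submatrix_le_minorNorm A.transpose g f

theorem Matrix.det_mul_eq_sum_prod_mul_det_submatrix {R m n : Type*} [CommRing R] [Fintype m]
    [DecidableEq m] [Fintype n] [DecidableEq n] (M : Matrix n m R) (N : Matrix m n R) :
    (M * N).det = ∑ f : n → m, (∏ k, M k (f k)) * (N.submatrix f id).det := by
  have h : (M * N).det = Matrix.detRowAlternating fun k => ∑ l, M k l • N l := by
    congr 1
    ext k j
    simp [Matrix.mul_apply]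
  rw [h, ← AlternatingMap.coe_multilinearMap, MultilinearMap.map_sum]
  refine Finset.sum_congr rfl fun f _ => ?_
  rw [MultilinearMap.map_smul_univ]
  rfl

theorem minorNorm_mul_le_right {p : ℕ} [Fact p.Prime] {l m n : ℕ}
    (U : Matrix (Fin l) (Fin m) ℤ_[p]) (A : Matrix (Fin m) (Fin n) ℤ_[p]) (i : ℕ) :
    minorNorm (U * A) i ≤ minorNorm A i := by
  refine minorNorm_le (minorNorm_nonneg _ _) fun f g => ?_
  rw [← Matrix.submatrix_mul_equiv U A f (Equiv.refl _) g,
    Matrix.det_mul_eq_sum_prod_mul_det_submatrix]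
  refine IsUltrametricDist.norm_sum_le_of_forall_le_of_nonneg (minorNorm_nonneg _ _)
    fun e _ => ?_
  rw [norm_mul]
  calc _ ≤ 1 * minorNorm A i := by
        gcongr
        · exact PadicInt.norm_le_one _
        · exact norm_det_submatrix_le_minorNorm A e g
    _ = _ := one_mul _

theorem minorNorm_mul_le_left {p : ℕ} [Fact p.Prime] {l m n : ℕ}
    (A : Matrix (Fin l) (Fin m) ℤ_[p]) (V : Matrix (Fin m) (Fin n) ℤ_[p]) (i : ℕ) :
    minorNorm (A * V) i ≤ minorNorm A i := by
  rw [← minorNorm_transpose, ← minorNorm_transpose A, Matrix.transpose_mul]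
  exact minorNorm_mul_le_right _ _ _

theorem minorNorm_mul_unit_mul {p : ℕ} [Fact p.Prime] {m n : ℕ}
    (U : (Matrix (Fin m) (Fin m) ℤ_[p])ˣ) (A : Matrix (Fin m) (Fin n) ℤ_[p])
    (V : (Matrix (Fin n) (Fin n) ℤ_[p])ˣ) (i : ℕ) :
    minorNorm (U.val * A * V.val) i = minorNorm A i := by
  apply le_antisymm
  · exact (minorNorm_mul_le_left _ _ _).trans (minorNorm_mul_le_right _ _ _)
  · have h : A = U⁻¹.val * (U.val * A * V.val) * V⁻¹.val := by
      simp [Matrix.mul_assoc]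
    conv_lhs => rw [h]
    exact (minorNorm_mul_le_left _ _ _).trans (minorNorm_mul_le_right _ _ _)

/-- The rectangular matrix with diagonal entries `d 0, d 1, …` and zeros elsewhere. -/
def rectDiagonal {R : Type*} [Zero R] (m n : ℕ) (d : ℕ → R) : Matrix (Fin m) (Fin n) R :=
  Matrix.of fun i j => if (i : ℕ) = j then d i else 0

theorem Finset.prod_le_prod_range_of_antitone {g : ℕ → ℝ} (hg : Antitone g) (h0 : ∀ k, 0 ≤ g k)
    (s : Finset ℕ) : ∏ k ∈ s, g k ≤ ∏ k ∈ Finset.range s.card, g k := by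
  have h : ∏ k ∈ s, g k = ∏ k : Fin s.card, g (s.orderEmbOfFin rfl k) := by
    rw [← Finset.prod_image (s := Finset.univ) (g := s.orderEmbOfFin rfl)
      (fun a _ b _ h => (s.orderEmbOfFin rfl).injective h)]
    congr 1
    simp
  rw [h, ← Fin.prod_univ_eq_prod_range]
  refine Finset.prod_le_prod (fun _ _ => h0 _) fun k _ => hg ?_
  obtain ⟨k, hk⟩ := k
  induction k with
  | zero => exact Nat.zero_le _
  | succ k ih =>
    have hlt : s.orderEmbOfFin rfl ⟨k, by omega⟩ < s.orderEmbOfFin rfl ⟨k + 1, hk⟩ :=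
      (s.orderEmbOfFin rfl).strictMono (Fin.mk_lt_mk.2 k.lt_succ_self)
    have := ih (by omega) (Finset.mem_univ _)
    exact this.trans_lt hlt

theorem minorNorm_rectDiagonal {p : ℕ} [Fact p.Prime] {m n : ℕ} {d : ℕ → ℤ_[p]}
    (hd : Antitone fun j => ‖d j‖) (h0 : ∀ j, m ≤ j ∨ n ≤ j → d j = 0) (i : ℕ) :
    minorNorm (rectDiagonal m n d) i = ∏ j ∈ Finset.range i, ‖d j‖ := by
  have hP : 0 ≤ ∏ j ∈ Finset.range i, ‖d j‖ := Finset.prod_nonneg fun _ _ => norm_nonneg _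
  apply le_antisymm
  · refine minorNorm_le hP fun f g => ?_
    by_cases hf : Function.Injective f
    swap
    · obtain ⟨a, b, hab, hne⟩ := Function.not_injective_iff.1 hf
      rw [Matrix.det_zero_of_row_eq hne (by ext; simp [hab]), norm_zero]
      exact hP
    rw [Matrix.det_apply']
    refine IsUltrametricDist.norm_sum_le_of_forall_le_of_nonneg hP fun σ _ => ?_
    have hinj : Set.InjOn (fun k => (f (σ k) : ℕ)) (Finset.univ : Finset (Fin i)) :=
      fun a _ b _ hab => σ.injective (hf (Fin.ext hab))
    calc _ ≤ 1 * ∏ k, ‖d (f (σ k))‖ := by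
          rw [norm_mul, norm_prod]
          gcongr
          · exact PadicInt.norm_le_one _
          · simp only [rectDiagonal, Matrix.submatrix_apply, Matrix.of_apply]
            split_ifs <;> simp
      _ = ∏ j ∈ Finset.univ.image fun k => (f (σ k) : ℕ), ‖d j‖ := by
          rw [one_mul, Finset.prod_image hinj]
      _ ≤ _ := by
          refine (Finset.prod_le_prod_range_of_antitone hd (fun _ => norm_nonneg _) _).trans_eq ?_
          rw [Finset.card_image_of_injOn hinj, Finset.card_univ, Fintype.card_fin]
  · by_cases hi : i ≤ m ∧ i ≤ n
    · refine le_trans (le_of_eq ?_) (norm_det_submatrix_le_minorNorm _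
        (Fin.castLE hi.1) (Fin.castLE hi.2))
      have : (rectDiagonal m n d).submatrix (Fin.castLE hi.1) (Fin.castLE hi.2) =
          Matrix.diagonal fun k : Fin i => d k := by
        ext a b
        simp [rectDiagonal, Matrix.diagonal_apply, Fin.ext_iff]
      rw [this, Matrix.det_diagonal, norm_prod, Fin.prod_univ_eq_prod_range fun j => ‖d j‖]
    · rw [Finset.prod_eq_zero (i := min m n) (by simp; omega)]
      · exact minorNorm_nonneg _ _
      · rw [h0 _ (by omega), norm_zero]

/-- The block diagonal matrix with blocks the scalar `c` and the matrix `A`. -/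
def consBlock {R : Type*} [Zero R] {m n : ℕ} (c : R) (A : Matrix (Fin m) (Fin n) R) :
    Matrix (Fin (m + 1)) (Fin (n + 1)) R :=
  Matrix.of (Fin.cons (Fin.cons c 0) fun i => Fin.cons 0 (A i))

theorem consBlock_mul_consBlock {R : Type*} [CommRing R] {l m n : ℕ} (a b : R)
    (A : Matrix (Fin l) (Fin m) R) (B : Matrix (Fin m) (Fin n) R) :
    consBlock a A * consBlock b B = consBlock (a * b) (A * B) := by
  ext i j
  refine Fin.cases ?_ (fun i => ?_) i <;> refine Fin.cases ?_ (fun j => ?_) j <;>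
    simp [consBlock, Matrix.mul_apply, Fin.sum_univ_succ]

theorem consBlock_one_one {R : Type*} [CommRing R] {m : ℕ} :
    consBlock (1 : R) (1 : Matrix (Fin m) (Fin m) R) = 1 := by
  ext i j
  refine Fin.cases ?_ (fun i => ?_) i <;> refine Fin.cases ?_ (fun j => ?_) j <;>
    simp [consBlock, Matrix.one_apply, Fin.ext_iff]

/-- The invertible block diagonal matrix with blocks `1` and `U`. -/
def consBlockUnit {R : Type*} [CommRing R] {m : ℕ} (U : (Matrix (Fin m) (Fin m) R)ˣ) :
    (Matrix (Fin (m + 1)) (Fin (m + 1)) R)ˣ where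
  val := consBlock 1 U.val
  inv := consBlock 1 U⁻¹.val
  val_inv := by rw [consBlock_mul_consBlock, one_mul, Units.mul_inv, consBlock_one_one]
  inv_val := by rw [consBlock_mul_consBlock, one_mul, Units.inv_mul, consBlock_one_one]

/-- The invertible matrix with ones on the diagonal and the entries of `q` below the first one. -/
def columnUnit {R : Type*} [CommRing R] {m : ℕ} (q : Fin m → R) :
    (Matrix (Fin (m + 1)) (Fin (m + 1)) R)ˣ where
  val := Matrix.of (Fin.cons (Fin.cons 1 0) fun i => Fin.cons (q i) ((1 : Matrix _ _ R) i))
  inv := Matrix.of (Fin.cons (Fin.cons 1 0) fun i => Fin.cons (-q i) ((1 : Matrix _ _ R) i))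
  val_inv := by
    rw [← consBlock_one_one]
    ext i j
    refine Fin.cases ?_ (fun i => ?_) i <;> refine Fin.cases ?_ (fun j => ?_) j <;>
      simp [consBlock, Matrix.mul_apply, Fin.sum_univ_succ, Matrix.one_apply]
  inv_val := by
    rw [← consBlock_one_one]
    ext i j
    refine Fin.cases ?_ (fun i => ?_) i <;> refine Fin.cases ?_ (fun j => ?_) j <;>
      simp [consBlock, Matrix.mul_apply, Fin.sum_univ_succ, Matrix.one_apply]

/-- The transpose of an invertible matrix, as an invertible matrix. -/
def transposeUnit {R : Type*} [CommRing R] {m : ℕ} (U : (Matrix (Fin m) (Fin m) R)ˣ) :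
    (Matrix (Fin m) (Fin m) R)ˣ where
  val := U.val.transpose
  inv := U⁻¹.val.transpose
  val_inv := by rw [← Matrix.transpose_mul, Units.inv_mul, Matrix.transpose_one]
  inv_val := by rw [← Matrix.transpose_mul, Units.mul_inv, Matrix.transpose_one]

/-- The permutation matrix of `σ`, as an invertible matrix. -/
def permUnit (R : Type*) [CommRing R] {m : ℕ} (σ : Equiv.Perm (Fin m)) :
    (Matrix (Fin m) (Fin m) R)ˣ where
  val := (1 : Matrix _ _ R).submatrix σ id
  inv := (1 : Matrix _ _ R).submatrix id σ
  val_inv := by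
    ext i j
    simp [Matrix.mul_apply, Matrix.one_apply]
  inv_val := by
    rw [Matrix.submatrix_mul_equiv, one_mul, Matrix.submatrix_id_id]

theorem PadicInt.dvd_of_norm_le {p : ℕ} [Fact p.Prime] {a b : ℤ_[p]} (h : ‖b‖ ≤ ‖a‖) : a ∣ b := by
  rcases eq_or_ne a 0 with rfl | ha
  · rw [norm_zero] at h
    rw [norm_le_zero_iff.1 h]
  · have ha' : (a : ℚ_[p]) ≠ 0 := PadicInt.coe_ne_zero.2 ha
    refine ⟨⟨b / a, ?_⟩, PadicInt.ext ?_⟩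
    · rw [norm_div]
      exact div_le_one_of_le₀ h (norm_nonneg _)
    · exact (mul_div_cancel₀ (b : ℚ_[p]) ha').symm

theorem exists_units_mul_mul_eq_consBlock {p : ℕ} [Fact p.Prime] {m n : ℕ}
    (A : Matrix (Fin (m + 1)) (Fin (n + 1)) ℤ_[p]) :
    ∃ (U : (Matrix (Fin (m + 1)) (Fin (m + 1)) ℤ_[p])ˣ)
      (V : (Matrix (Fin (n + 1)) (Fin (n + 1)) ℤ_[p])ˣ) (c : ℤ_[p])
      (B : Matrix (Fin m) (Fin n) ℤ_[p]),
      U.val * A * V.val = consBlock c B ∧ ∀ i j, ‖B i j‖ ≤ ‖c‖ := by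
  obtain ⟨⟨i₀, j₀⟩, hmax⟩ := Finite.exists_max fun ij : Fin (m + 1) × Fin (n + 1) => ‖A ij.1 ij.2‖
  set A₁ := A.submatrix (Equiv.swap 0 i₀) (Equiv.swap 0 j₀) with hA₁
  have hmax₁ : ∀ i j, ‖A₁ i j‖ ≤ ‖A₁ 0 0‖ := fun i j => by
    simpa [hA₁] using hmax (Equiv.swap 0 i₀ i, Equiv.swap 0 j₀ j)
  have hdvd : ∀ i j, A₁ 0 0 ∣ A₁ i j := fun i j => PadicInt.dvd_of_norm_le (hmax₁ i j)
  choose q hq using fun i : Fin m => hdvd i.succ 0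
  choose q' hq' using fun j : Fin n => hdvd 0 j.succ
  set B : Matrix (Fin m) (Fin n) ℤ_[p] :=
    Matrix.of fun i j => A₁ i.succ j.succ - q i * A₁ 0 0 * q' j with hB
  refine ⟨columnUnit (-q) * permUnit _ (Equiv.swap 0 i₀),
    transposeUnit (permUnit _ (Equiv.swap 0 j₀)) * transposeUnit (columnUnit (-q')),
    A₁ 0 0, B, ?_, fun i j => ?_⟩
  · have h₁ : (permUnit ℤ_[p] (Equiv.swap 0 i₀)).val * A *
        (transposeUnit (permUnit ℤ_[p] (Equiv.swap 0 j₀))).val = A₁ := by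
      ext i j
      simp [permUnit, transposeUnit, Matrix.mul_apply, Matrix.one_apply, hA₁]
    calc _ = (columnUnit (-q)).val * ((permUnit ℤ_[p] (Equiv.swap 0 i₀)).val * A *
        (transposeUnit (permUnit ℤ_[p] (Equiv.swap 0 j₀))).val) *
          (transposeUnit (columnUnit (-q'))).val := by simp [Matrix.mul_assoc]
      _ = _ := by
        rw [h₁]
        ext i j
        refine Fin.cases ?_ (fun i => ?_) i <;> refine Fin.cases ?_ (fun j => ?_) j <;>
          simp [consBlock, columnUnit, transposeUnit, Matrix.mul_apply, Fin.sum_univ_succ,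
            Matrix.one_apply, hB, hq, hq'] <;> ring
  · rw [hB, Matrix.of_apply, sub_eq_add_neg]
    refine (PadicInt.nonarchimedean _ _).trans (max_le (hmax₁ _ _) ?_)
    rw [norm_neg, norm_mul, norm_mul]
    exact mul_le_of_le_one_right (by positivity) (PadicInt.norm_le_one _) |>.trans
      (mul_le_of_le_one_left (norm_nonneg _) (PadicInt.norm_le_one _))

theorem exists_units_mul_mul_eq_rectDiagonal {p : ℕ} [Fact p.Prime] {m n : ℕ}
    (A : Matrix (Fin m) (Fin n) ℤ_[p]) :
    ∃ (U : (Matrix (Fin m) (Fin m) ℤ_[p])ˣ) (V : (Matrix (Fin n) (Fin n) ℤ_[p])ˣ)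
      (d : ℕ → ℤ_[p]), U.val * A * V.val = rectDiagonal m n d ∧ (Antitone fun j => ‖d j‖) ∧
        ∀ j, m ≤ j ∨ n ≤ j → d j = 0 := by
  induction m generalizing n with
  | zero => exact ⟨1, 1, 0, by ext i; exact i.elim0, fun _ _ _ => le_rfl, fun _ _ => rfl⟩
  | succ m ih =>
    cases n with
    | zero => exact ⟨1, 1, 0, by ext i j; exact j.elim0, fun _ _ _ => le_rfl, fun _ _ => rfl⟩
    | succ n =>
      obtain ⟨U₁, V₁, c, B, h₁, hBc⟩ := exists_units_mul_mul_eq_consBlock A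
      obtain ⟨U₂, V₂, d, h₂, hd, hd0⟩ := ih B
      refine ⟨consBlockUnit U₂ * U₁, V₁ * consBlockUnit V₂, fun j => j.casesOn c d, ?_, ?_, ?_⟩
      · calc _ = (consBlockUnit U₂).val * (U₁.val * A * V₁.val) * (consBlockUnit V₂).val := by
              simp [Matrix.mul_assoc]
          _ = consBlock c (rectDiagonal m n d) := by
              rw [h₁, consBlockUnit, consBlockUnit, consBlock_mul_consBlock,
                consBlock_mul_consBlock, h₂, one_mul, mul_one]
          _ = _ := by
              ext i j
              refine Fin.cases ?_ (fun i => ?_) i <;> refine Fin.cases ?_ (fun j => ?_) j <;>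
                simp [consBlock, rectDiagonal]
      · refine antitone_nat_of_succ_le fun j => ?_
        cases j with
        | succ j => exact hd j.le_succ
        | zero =>
          have hB₁ : minorNorm B 1 ≤ ‖c‖ :=
            minorNorm_le (norm_nonneg _) fun f g => by simpa using hBc (f 0) (g 0)
          rw [← minorNorm_mul_unit_mul U₂ B V₂, h₂, minorNorm_rectDiagonal hd hd0] at hB₁
          simpa using hB₁
      · rintro (_ | j) hj
        · omega
        · exact hd0 j (by omega)

instance (p : ℕ) [Fact p.Prime] : (padicHaar p).IsAddHaarMeasure := by
  unfold padicHaar; infer_instance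

instance (p : ℕ) [Fact p.Prime] : IsProbabilityMeasure (padicHaar p) :=
  ⟨Measure.addHaarMeasure_self⟩

instance (p : ℕ) [Fact p.Prime] : SecondCountableTopology ℤ_[p] :=
  secondCountable_of_proper

instance (p N : ℕ) [Fact p.Prime] : (padicHaarPi p N).IsAddHaarMeasure := by
  unfold padicHaarPi; infer_instance

instance (p N : ℕ) [Fact p.Prime] : IsProbabilityMeasure (padicHaarPi p N) := by
  unfold padicHaarPi; infer_instance

theorem padicHaar_norm_le_pow (p : ℕ) [Fact p.Prime] (n : ℕ) :
    padicHaar p {x | ‖x‖ ≤ (p : ℝ) ^ (-n : ℤ)} = ENNReal.ofReal ((p : ℝ) ^ (-n : ℤ)) := by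
  set H : AddSubgroup ℤ_[p] := (PadicInt.toZModPow n : ℤ_[p] →+* ZMod (p ^ n)).toAddMonoidHom.ker
    with hH
  have hset : {x : ℤ_[p] | ‖x‖ ≤ (p : ℝ) ^ (-n : ℤ)} = H := by
    ext x
    rw [Set.mem_ofPred_eq, PadicInt.norm_le_pow_iff_mem_span_pow, ← PadicInt.ker_toZModPow]
    rfl
  have hsurj : Function.Surjective (PadicInt.toZModPow n : ℤ_[p] →+* ZMod (p ^ n)) :=
    ZMod.ringHom_surjective _
  have hindex : H.index = p ^ n := by
    rw [hH, AddSubgroup.index_ker, AddMonoidHom.range_eq_top.2 hsurj]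
    simp
  have hp : (p : ℝ) ≠ 0 := Nat.cast_ne_zero.2 (Fact.out : p.Prime).ne_zero
  have hp0 : p ^ n ≠ 0 := pow_ne_zero _ (Fact.out : p.Prime).ne_zero
  have : H.FiniteIndex := ⟨by rw [hindex]; exact hp0⟩
  have hmeas : MeasurableSet (H : Set ℤ_[p]) := by
    rw [← hset]
    exact (isClosed_le continuous_norm continuous_const).measurableSet
  have h := H.index_mul_measure hmeas (padicHaar p)
  rw [hindex, measure_univ] at h
  rw [hset, ENNReal.eq_inv_of_mul_eq_one_left ((mul_comm _ _).trans h), zpow_neg, zpow_natCast,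
    ENNReal.ofReal_inv_of_pos (by positivity)]
  congr 1
  rw [ENNReal.ofReal_pow (by positivity), ENNReal.ofReal_natCast]
  push_cast
  rfl

theorem PadicInt.exists_norm_eq_pow {p : ℕ} [Fact p.Prime] {x : ℤ_[p]} (hx : x ≠ 0) :
    ∃ k : ℕ, ‖x‖ = (p : ℝ) ^ (-k : ℤ) :=
  ⟨_, PadicInt.norm_eq_zpow_neg_valuation hx⟩

theorem padicHaar_norm_mul_le (p : ℕ) [Fact p.Prime] {d : ℤ_[p]} (hd : d ≠ 0) (n : ℕ) :
    padicHaar p {x | ‖d * x‖ ≤ (p : ℝ) ^ (-n : ℤ)} =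
      ENNReal.ofReal (min 1 ((p : ℝ) ^ (-n : ℤ) / ‖d‖)) := by
  have hp : 1 < (p : ℝ) := Nat.one_lt_cast.2 (Fact.out : p.Prime).one_lt
  have hd0 : 0 < ‖d‖ := norm_pos_iff.2 hd
  have hset : {x | ‖d * x‖ ≤ (p : ℝ) ^ (-n : ℤ)} = {x | ‖x‖ ≤ (p : ℝ) ^ (-n : ℤ) / ‖d‖} := by
    ext x
    rw [Set.mem_ofPred_eq, Set.mem_ofPred_eq, norm_mul, le_div_iff₀ hd0, mul_comm]
  rw [hset]
  obtain ⟨k, hk⟩ := PadicInt.exists_norm_eq_pow hd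
  rw [hk, ← zpow_sub₀ (by positivity)]
  rcases le_total n k with h | h
  · have h1 : 1 ≤ (p : ℝ) ^ (-n - -k : ℤ) := one_le_zpow₀ hp.le (by omega)
    rw [min_eq_left h1, ENNReal.ofReal_one, ← measure_univ (μ := padicHaar p)]
    congr 1
    exact Set.eq_univ_of_forall fun x => (PadicInt.norm_le_one x).trans h1
  · have h1 : (p : ℝ) ^ (-n - -k : ℤ) ≤ 1 := zpow_le_one_of_nonpos₀ hp.le (by omega)
    rw [min_eq_right h1, show (-n - -k : ℤ) = -((n - k : ℕ) : ℤ) by omega, padicHaar_norm_le_pow]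

theorem padicHaar_singleton (p : ℕ) [Fact p.Prime] (x : ℤ_[p]) : padicHaar p {x} = 0 := by
  have h0 : padicHaar p {0} = 0 := by
    have hp : 1 < (p : ℝ) := Nat.one_lt_cast.2 (Fact.out : p.Prime).one_lt
    have hle : ∀ n : ℕ, padicHaar p {0} ≤ ENNReal.ofReal ((p : ℝ)⁻¹ ^ n) := fun n => by
      rw [inv_pow, ← zpow_natCast, ← zpow_neg, ← padicHaar_norm_le_pow]
      refine measure_mono (Set.singleton_subset_iff.2 ?_)
      rw [Set.mem_ofPred_eq, norm_zero]
      positivity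
    have hlim : Filter.Tendsto (fun n : ℕ => ENNReal.ofReal ((p : ℝ)⁻¹ ^ n)) Filter.atTop
        (nhds (ENNReal.ofReal 0)) := ENNReal.tendsto_ofReal
      (tendsto_pow_atTop_nhds_zero_of_lt_one (by positivity) (inv_lt_one_of_one_lt₀ hp))
    rw [ENNReal.ofReal_zero] at hlim
    exact le_zero_iff.1 (ge_of_tendsto' hlim hle)
  rw [← h0, ← measure_preimage_add (padicHaar p) x {x}]
  congr 1
  ext y
  simp

instance (p : ℕ) [Fact p.Prime] : NullSingletonClass (padicHaar p) := ⟨padicHaar_singleton p⟩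

theorem measurePreserving_mulVec_unit {p N : ℕ} [Fact p.Prime]
    (V : (Matrix (Fin N) (Fin N) ℤ_[p])ˣ) :
    MeasurePreserving (fun b => V.val.mulVec b) (padicHaarPi p N) (padicHaarPi p N) := by
  refine AddMonoidHom.measurePreserving (f := (Matrix.mulVecLin V.val).toAddMonoidHom)
    ?_ (fun b => ⟨V⁻¹.val.mulVec b, ?_⟩) rfl
  · exact Continuous.matrix_mulVec continuous_const continuous_id
  · simp

theorem norm_mulVec_le {p m n : ℕ} [Fact p.Prime] (A : Matrix (Fin m) (Fin n) ℤ_[p])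
    (b : Fin n → ℤ_[p]) : ‖A.mulVec b‖ ≤ ‖b‖ := by
  refine (pi_norm_le_iff_of_nonneg (norm_nonneg _)).2 fun i => ?_
  rw [Matrix.mulVec, dotProduct]
  refine IsUltrametricDist.norm_sum_le_of_forall_le_of_nonneg (norm_nonneg b) fun j _ => ?_
  rw [norm_mul]
  exact (mul_le_of_le_one_left (norm_nonneg (b j)) (PadicInt.norm_le_one _)).trans (norm_le_pi_norm b j)

theorem norm_mulVec_unit {p N : ℕ} [Fact p.Prime] (U : (Matrix (Fin N) (Fin N) ℤ_[p])ˣ)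
    (b : Fin N → ℤ_[p]) : ‖U.val.mulVec b‖ = ‖b‖ := by
  refine le_antisymm (norm_mulVec_le _ _) ?_
  simpa using norm_mulVec_le U⁻¹.val (U.val.mulVec b)

theorem padicHaarPi_norm_mulVec_le {p m n : ℕ} [Fact p.Prime]
    (A : Matrix (Fin m) (Fin n) ℤ_[p]) (U : (Matrix (Fin m) (Fin m) ℤ_[p])ˣ)
    (V : (Matrix (Fin n) (Fin n) ℤ_[p])ˣ) (c : ℝ) :
    padicHaarPi p n {b | ‖(U.val * A * V.val).mulVec b‖ ≤ c} =
      padicHaarPi p n {b | ‖A.mulVec b‖ ≤ c} := by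
  have hmeas : MeasurableSet {b | ‖A.mulVec b‖ ≤ c} :=
    (isClosed_le (Continuous.matrix_mulVec continuous_const continuous_id).norm
      continuous_const).measurableSet
  rw [← (measurePreserving_mulVec_unit V).measure_preimage hmeas.nullMeasurableSet]
  congr 1
  ext b
  simp [← Matrix.mulVec_mulVec, norm_mulVec_unit]

theorem padicHaarPi_norm_rectDiagonal_mulVec_le {p m n r : ℕ} [Fact p.Prime] {d : ℕ → ℤ_[p]}
    (h0 : ∀ j, m ≤ j ∨ n ≤ j → d j = 0) (hr : ∀ j, d j ≠ 0 ↔ j < r) (k : ℕ) :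
    padicHaarPi p n {b | ‖(rectDiagonal m n d).mulVec b‖ ≤ (p : ℝ) ^ (-k : ℤ)} =
      ENNReal.ofReal (∏ j ∈ Finset.range r, min 1 ((p : ℝ) ^ (-k : ℤ) / ‖d j‖)) := by
  have hpk : 0 ≤ (p : ℝ) ^ (-k : ℤ) := by positivity
  have hset : {b | ‖(rectDiagonal m n d).mulVec b‖ ≤ (p : ℝ) ^ (-k : ℤ)} =
      Set.univ.pi fun j : Fin n => {x | ‖d j * x‖ ≤ (p : ℝ) ^ (-k : ℤ)} := by
    ext b
    simp only [Set.mem_ofPred_eq, Set.mem_univ_pi, pi_norm_le_iff_of_nonneg hpk]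
    constructor
    · intro h j
      by_cases hj : (j : ℕ) < m
      · have := h ⟨j, hj⟩
        simpa [Matrix.mulVec, dotProduct, rectDiagonal, Fin.val_inj] using this
      · rw [h0 j (by omega), zero_mul, norm_zero]
        exact hpk
    · intro h i
      rw [Matrix.mulVec, dotProduct]
      refine IsUltrametricDist.norm_sum_le_of_forall_le_of_nonneg hpk fun j _ => ?_
      by_cases hij : (i : ℕ) = j
      · simpa [rectDiagonal, hij] using h j
      · simp [rectDiagonal, hij]
  have hrn : r ≤ n := by
    by_contra hlt
    exact (hr n).2 (by omega) (h0 n (Or.inr le_rfl))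
  rw [hset, padicHaarPi, Measure.pi_pi,
    Fin.prod_univ_eq_prod_range fun j => padicHaar p {x | ‖d j * x‖ ≤ (p : ℝ) ^ (-k : ℤ)},
    ENNReal.ofReal_prod_of_nonneg fun j _ => le_min zero_le_one (by positivity),
    ← Finset.prod_subset (Finset.range_mono hrn)]
  · exact Finset.prod_congr rfl fun j hj =>
      padicHaar_norm_mul_le p ((hr j).2 (Finset.mem_range.1 hj)) k
  · intro j _ hj
    have hdj : d j = 0 := by
      by_contra hne
      exact hj (Finset.mem_range.2 ((hr j).1 hne))
    simp [hdj]

theorem indicator_mul_prod_min_eq_sum {δ : ℕ → ℝ} (hδ : Antitone δ) {t : ℝ} {r : ℕ}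
    (hpos : ∀ j < r, 0 < δ (j + 1)) :
    (if t < δ 0 then 1 else 0) * ∏ j ∈ Finset.range r, min 1 (t / δ (j + 1)) =
      ∑ i ∈ Finset.range r, ((if t < δ i then 1 else 0) - (if t < δ (i + 1) then 1 else 0)) *
          (t ^ i / ∏ j ∈ Finset.range i, δ (j + 1)) +
        (if t < δ r then 1 else 0) * (t ^ r / ∏ j ∈ Finset.range r, δ (j + 1)) := by
  induction r with
  | zero => simp
  | succ r ih =>
    have ih := ih fun j hj => hpos j (by omega)
    have hr := hpos r r.lt_succ_self
    rw [Finset.prod_range_succ, ← mul_assoc, ih]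
    by_cases ht : t < δ (r + 1)
    · have hlt : ∀ i ≤ r + 1, t < δ i := fun i hi => ht.trans_le (hδ hi)
      rw [min_eq_right ((div_le_one hr).2 ht.le), Finset.sum_range_succ,
        Finset.sum_eq_zero fun i hi => ?_]
      · rw [if_pos (hlt r (by omega)), if_pos ht, Finset.prod_range_succ]
        ring
      · rw [Finset.mem_range] at hi
        rw [if_pos (hlt i (by omega)), if_pos (hlt (i + 1) (by omega)), sub_self, zero_mul]
    · rw [min_eq_left ((one_le_div hr).2 (not_lt.1 ht)), Finset.sum_range_succ, if_neg ht]
      ring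

theorem hasSum_indicator_zpow_rpow {p : ℕ} (hp : 1 < p) {w δ : ℝ} (hw : 0 < w)
    (hδ : δ = 0 ∨ ∃ k : ℕ, δ = (p : ℝ) ^ (-k : ℤ)) :
    HasSum (fun n : ℕ => (if (p : ℝ) ^ (-n : ℤ) < δ then (1 : ℝ) else 0) *
      ((p : ℝ) ^ (-n : ℤ)) ^ w) (δ ^ w * ((p : ℝ) ^ (-w) / (1 - (p : ℝ) ^ (-w)))) := by
  have hp1 : 1 < (p : ℝ) := Nat.one_lt_cast.2 hp
  have hp0 : 0 < (p : ℝ) := by linarith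
  rcases hδ with rfl | ⟨k, rfl⟩
  · rw [Real.zero_rpow hw.ne', zero_mul]
    convert hasSum_zero (α := ℝ) (β := ℕ) using 2 with n
    rw [if_neg (not_lt.2 (by positivity)), zero_mul]
  · have hq : ∀ n : ℕ, ((p : ℝ) ^ (-n : ℤ)) ^ w = ((p : ℝ) ^ (-w)) ^ n := fun n => by
      rw [← Real.rpow_intCast, ← Real.rpow_natCast, ← Real.rpow_mul hp0.le, ← Real.rpow_mul hp0.le]
      push_cast
      ring_nf
    have hlt : ∀ n : ℕ, (p : ℝ) ^ (-n : ℤ) < (p : ℝ) ^ (-k : ℤ) ↔ k < n := fun n => by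
      rw [zpow_lt_zpow_iff_right₀ hp1]
      omega
    simp only [hq, hlt]
    set q := (p : ℝ) ^ (-w) with hqdef
    have hq0 : 0 ≤ q := by positivity
    have hq1 : q < 1 := Real.rpow_lt_one_of_one_lt_of_neg hp1 (by linarith)
    rw [← hasSum_nat_add_iff' (k + 1), Finset.sum_eq_zero, sub_zero]
    · rw [show q ^ k * (q / (1 - q)) = q ^ (k + 1) * (1 - q)⁻¹ by rw [pow_succ]; ring]
      refine (congrArg (HasSum · _) (funext fun n => ?_)).mpr
        ((hasSum_geometric_of_lt_one hq0 hq1).mul_left (q ^ (k + 1)))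
      rw [if_pos (by omega), one_mul, pow_add, mul_comm]
    · intro n hn
      rw [if_neg (by simp at hn; omega), zero_mul]

theorem PadicInt.pi_norm_eq_zero_or_eq_pow {p m : ℕ} [Fact p.Prime] (v : Fin m → ℤ_[p]) :
    ‖v‖ = 0 ∨ ∃ k : ℕ, ‖v‖ = (p : ℝ) ^ (-k : ℤ) := by
  rcases isEmpty_or_nonempty (Fin m) with h | h
  · exact Or.inl (by rw [Subsingleton.elim v 0, norm_zero])
  · obtain ⟨i, hi⟩ := Finite.exists_max fun i => ‖v i‖
    have hv : ‖v‖ = ‖v i‖ :=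
      le_antisymm ((pi_norm_le_iff_of_nonneg (norm_nonneg _)).2 hi) (norm_le_pi_norm v i)
    rw [hv]
    rcases eq_or_ne (v i) 0 with h0 | h0
    · exact Or.inl (by rw [h0, norm_zero])
    · exact Or.inr (PadicInt.exists_norm_eq_pow h0)

theorem PadicInt.pi_norm_le_one {p m : ℕ} [Fact p.Prime] (v : Fin m → ℤ_[p]) : ‖v‖ ≤ 1 :=
  (pi_norm_le_iff_of_nonneg zero_le_one).2 fun i => PadicInt.norm_le_one (v i)

theorem hasSum_measure_norm_mulVec_le {p m n : ℕ} [Fact p.Prime]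
    (A : Matrix (Fin m) (Fin n) ℤ_[p]) {s : ℝ} (hs : 0 < s) :
    HasSum (fun k : ℕ => (if (p : ℝ) ^ (-k : ℤ) < 1 then (1 : ℝ) else 0) *
        ((p : ℝ) ^ (-k : ℤ)) ^ s * (padicHaarPi p n).real {b | ‖A.mulVec b‖ ≤ (p : ℝ) ^ (-k : ℤ)})
      ((1 - ∫ b, ‖A.mulVec b‖ ^ s ∂padicHaarPi p n) *
        ((p : ℝ) ^ (-s) / (1 - (p : ℝ) ^ (-s)))) := by
  have hp : 1 < p := (Fact.out : p.Prime).one_lt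
  have hcont : Continuous fun b : Fin n → ℤ_[p] => ‖A.mulVec b‖ :=
    (Continuous.matrix_mulVec continuous_const continuous_id).norm
  have hmeas : ∀ c, MeasurableSet {b : Fin n → ℤ_[p] | ‖A.mulVec b‖ ≤ c} := fun c =>
    (isClosed_le hcont continuous_const).measurableSet
  set F : ℕ → (Fin n → ℤ_[p]) → ℝ := fun k =>
    Set.indicator {b | ‖A.mulVec b‖ ≤ (p : ℝ) ^ (-k : ℤ)}
      fun _ => (if (p : ℝ) ^ (-k : ℤ) < 1 then (1 : ℝ) else 0) * ((p : ℝ) ^ (-k : ℤ)) ^ s with hF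
  have hF_int : ∀ k, Integrable (F k) (padicHaarPi p n) := fun k =>
    (integrable_const _).indicator (hmeas _)
  have hF_nonneg : ∀ k b, 0 ≤ F k b := fun k b => Set.indicator_nonneg (fun _ _ => by positivity) b
  have hF_integral : ∀ k, ∫ b, F k b ∂padicHaarPi p n =
      (if (p : ℝ) ^ (-k : ℤ) < 1 then (1 : ℝ) else 0) * ((p : ℝ) ^ (-k : ℤ)) ^ s *
        (padicHaarPi p n).real {b | ‖A.mulVec b‖ ≤ (p : ℝ) ^ (-k : ℤ)} := fun k => by
    rw [integral_indicator_const _ (hmeas _), smul_eq_mul, mul_comm]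
  have hone := hasSum_indicator_zpow_rpow hp hs (δ := 1) (Or.inr ⟨0, by simp⟩)
  have hF_sum : Summable fun k => ∫ b, ‖F k b‖ ∂padicHaarPi p n := by
    refine Summable.of_nonneg_of_le (fun k => integral_nonneg fun _ => norm_nonneg _)
      (fun k => ?_) hone.summable
    simp only [Real.norm_of_nonneg (hF_nonneg k _), hF_integral]
    exact mul_le_of_le_one_right (by positivity) measureReal_le_one
  have hF_tsum : ∀ b, ∑' k, F k b =
      (1 - ‖A.mulVec b‖ ^ s) * ((p : ℝ) ^ (-s) / (1 - (p : ℝ) ^ (-s))) := fun b => by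
    have h := hone.sub
      (hasSum_indicator_zpow_rpow hp hs (PadicInt.pi_norm_eq_zero_or_eq_pow (A.mulVec b)))
    rw [Real.one_rpow, ← sub_mul] at h
    rw [← h.tsum_eq]
    refine tsum_congr fun k => ?_
    have hle := PadicInt.pi_norm_le_one (A.mulVec b)
    simp only [hF, Set.indicator_apply, Set.mem_ofPred_eq]
    by_cases h₁ : ‖A.mulVec b‖ ≤ (p : ℝ) ^ (-k : ℤ)
    · rw [if_pos h₁, if_neg (not_lt.2 h₁), zero_mul, sub_zero]
    · rw [if_neg h₁, if_pos (not_le.1 h₁), if_pos ((not_le.1 h₁).trans_le hle), sub_self]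
  have h := hasSum_integral_of_summable_integral_norm hF_int hF_sum
  simp only [hF_integral, hF_tsum] at h
  have hint : Integrable (fun b => ‖A.mulVec b‖ ^ s) (padicHaarPi p n) :=
    (hcont.rpow_const fun _ => Or.inr hs.le).integrable_of_hasCompactSupport
      (HasCompactSupport.of_compactSpace _)
  rw [integral_mul_const, integral_sub (integrable_const _) hint, integral_const, probReal_univ,
    one_smul] at h
  exact h

theorem exists_antitone_minorNorm_eq_prod {p m n : ℕ} [Fact p.Prime]
    (A : Matrix (Fin m) (Fin n) ℤ_[p]) :
    ∃ d : ℕ → ℤ_[p], (Antitone fun j => ‖d j‖) ∧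
      (∀ i, minorNorm A i = ∏ j ∈ Finset.range i, ‖d j‖) ∧
      ∀ r, (∀ j, d j ≠ 0 ↔ j < r) → ∀ k : ℕ,
        (padicHaarPi p n).real {b | ‖A.mulVec b‖ ≤ (p : ℝ) ^ (-k : ℤ)} =
          ∏ j ∈ Finset.range r, min 1 ((p : ℝ) ^ (-k : ℤ) / ‖d j‖) := by
  obtain ⟨U, V, d, hUV, hd, h0⟩ := exists_units_mul_mul_eq_rectDiagonal A
  refine ⟨d, hd, fun i => ?_, fun r hr k => ?_⟩
  · rw [← minorNorm_mul_unit_mul U A V, hUV, minorNorm_rectDiagonal hd h0]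
  · rw [measureReal_def, ← padicHaarPi_norm_mulVec_le A U V, hUV,
      padicHaarPi_norm_rectDiagonal_mulVec_le h0 hr, ENNReal.toReal_ofReal]
    exact Finset.prod_nonneg fun j _ => le_min zero_le_one (by positivity)

theorem minorNorm_ne_zero_of_le {p m n : ℕ} [Fact p.Prime] {A : Matrix (Fin m) (Fin n) ℤ_[p]}
    {i r : ℕ} (hir : i ≤ r) (hr : minorNorm A r ≠ 0) : minorNorm A i ≠ 0 := by
  obtain ⟨d, -, hM, -⟩ := exists_antitone_minorNorm_eq_prod A
  rw [hM, Finset.prod_ne_zero_iff] at hr ⊢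
  exact fun j hj => hr j (Finset.range_mono hir hj)

theorem integral_norm_mulVec_rpow {p m n r : ℕ} [Fact p.Prime]
    {A : Matrix (Fin m) (Fin n) ℤ_[p]} (hr : minorNorm A r ≠ 0) (hr' : minorNorm A (r + 1) = 0)
    {s : ℝ} (hs : 0 < s) :
    ∫ b, ‖A.mulVec b‖ ^ s ∂padicHaarPi p n =
      1 - ∑ i ∈ Finset.range (r + 1),
        ((p : ℝ) ^ (-(i : ℤ)) * (1 - (p : ℝ) ^ (-s)) / (1 - (p : ℝ) ^ (-(s + i)))) *
          (((minorNorm A i / minorNorm A (i - 1)) ^ (s + i) -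
            (minorNorm A (i + 1) / minorNorm A i) ^ (s + i)) / minorNorm A i) := by
  have hp1 : 1 < (p : ℝ) := Nat.one_lt_cast.2 (Fact.out : p.Prime).one_lt
  have hp0 : 0 < (p : ℝ) := by linarith
  obtain ⟨d, hd, hM, hμ⟩ := exists_antitone_minorNorm_eq_prod A
  have hdpos : ∀ j < r, d j ≠ 0 := fun j hj => by
    rw [hM, Finset.prod_ne_zero_iff] at hr
    exact norm_ne_zero_iff.1 (hr j (Finset.mem_range.2 hj))
  have hdr : d r = 0 := by
    rw [hM, Finset.prod_range_succ, ← hM] at hr'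
    exact norm_eq_zero.1 ((mul_eq_zero.1 hr').resolve_left hr)
  have hd_iff : ∀ j, d j ≠ 0 ↔ j < r := fun j => by
    refine ⟨fun hj => ?_, hdpos j⟩
    by_contra hle
    refine hj (norm_le_zero_iff.1 ((hd (not_lt.1 hle)).trans_eq ?_))
    simp [hdr]
  set δ : ℕ → ℝ := fun i => i.casesOn 1 fun j => ‖d j‖ with hδdef
  have hδ : Antitone δ := antitone_nat_of_succ_le fun i => by
    cases i with
    | zero => exact PadicInt.norm_le_one _
    | succ i => exact hd i.le_succ
  have hδval : ∀ i, δ i = 0 ∨ ∃ k : ℕ, δ i = (p : ℝ) ^ (-k : ℤ) := fun i => by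
    cases i with
    | zero => exact Or.inr ⟨0, by simp [hδdef]⟩
    | succ i =>
      rcases eq_or_ne (d i) 0 with h | h
      · exact Or.inl (by simp [hδdef, h])
      · exact Or.inr (PadicInt.exists_norm_eq_pow h)
  have hratio : ∀ i ≤ r, minorNorm A (i + 1) / minorNorm A i = δ (i + 1) := fun i hi => by
    have := minorNorm_ne_zero_of_le hi hr
    rw [hM (i + 1), Finset.prod_range_succ, ← hM, mul_div_cancel_left₀ _ this]
  have hratio' : ∀ i ≤ r, minorNorm A i / minorNorm A (i - 1) = δ i := fun i hi => by
    cases i with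
    | zero => exact div_self (minorNorm_ne_zero_of_le r.zero_le hr)
    | succ i => exact hratio i (by omega)
  have hsum := hasSum_measure_norm_mulVec_le A hs
  have hsum' := hasSum_sum (s := Finset.range (r + 1))
    (f := fun i (k : ℕ) => ((if (p : ℝ) ^ (-k : ℤ) < δ i then (1 : ℝ) else 0) *
      ((p : ℝ) ^ (-k : ℤ)) ^ (s + i) - (if (p : ℝ) ^ (-k : ℤ) < δ (i + 1) then (1 : ℝ) else 0) *
        ((p : ℝ) ^ (-k : ℤ)) ^ (s + i)) / minorNorm A i) fun i _ =>
    ((hasSum_indicator_zpow_rpow (Fact.out : p.Prime).one_lt (by positivity : 0 < s + i)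
      (hδval i)).sub (hasSum_indicator_zpow_rpow (Fact.out : p.Prime).one_lt
        (by positivity : 0 < s + i) (hδval (i + 1)))).div_const (minorNorm A i)
  have hterm : ∀ k : ℕ, (if (p : ℝ) ^ (-k : ℤ) < 1 then (1 : ℝ) else 0) *
        ((p : ℝ) ^ (-k : ℤ)) ^ s *
          (padicHaarPi p n).real {b | ‖A.mulVec b‖ ≤ (p : ℝ) ^ (-k : ℤ)} =
      ∑ i ∈ Finset.range (r + 1), ((if (p : ℝ) ^ (-k : ℤ) < δ i then (1 : ℝ) else 0) *
        ((p : ℝ) ^ (-k : ℤ)) ^ (s + i) - (if (p : ℝ) ^ (-k : ℤ) < δ (i + 1) then (1 : ℝ) else 0) *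
          ((p : ℝ) ^ (-k : ℤ)) ^ (s + i)) / minorNorm A i := fun k => by
    have ht : 0 < (p : ℝ) ^ (-k : ℤ) := by positivity
    have h := indicator_mul_prod_min_eq_sum hδ (t := (p : ℝ) ^ (-k : ℤ)) (r := r)
      fun j hj => norm_pos_iff.2 (hdpos j hj)
    have hlast : ¬ (p : ℝ) ^ (-k : ℤ) < δ (r + 1) := by
      simp [hδdef, hdr]
    rw [hμ r hd_iff]
    calc _ = ((p : ℝ) ^ (-k : ℤ)) ^ s * ((if (p : ℝ) ^ (-k : ℤ) < δ 0 then 1 else 0) *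
          ∏ j ∈ Finset.range r, min 1 ((p : ℝ) ^ (-k : ℤ) / δ (j + 1))) := by
            rw [show δ 0 = 1 from rfl]
            ring
      _ = _ := by
        rw [h, Finset.sum_range_succ, if_neg hlast, mul_add, Finset.mul_sum]
        congr 1
        · refine Finset.sum_congr rfl fun i _ => ?_
          rw [Real.rpow_add ht, Real.rpow_natCast, hM i]
          ring
        · rw [Real.rpow_add ht, Real.rpow_natCast, hM r]
          ring
  simp only [hterm] at hsum
  have heq := hsum.unique hsum'
  have hq0 : 0 < (p : ℝ) ^ (-s) := by positivity
  have hq1 : 0 < 1 - (p : ℝ) ^ (-s) :=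
    sub_pos.2 (Real.rpow_lt_one_of_one_lt_of_neg hp1 (by linarith))
  rw [mul_div_assoc', div_eq_iff hq1.ne', ← eq_div_iff hq0.ne'] at heq
  rw [eq_sub_iff_add_eq, ← eq_sub_iff_add_eq', heq, Finset.sum_mul, Finset.sum_div]
  refine Finset.sum_congr rfl fun i hi => ?_
  have hir : i ≤ r := Nat.lt_succ_iff.1 (Finset.mem_range.1 hi)
  rw [hratio i hir, hratio' i hir, neg_add, Real.rpow_add hp0, Real.rpow_neg hp0.le (i : ℝ),
    Real.rpow_natCast, zpow_neg, zpow_natCast]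
  field_simp

theorem padicHaarPi_eq_zero_of_forall_finite {p N : ℕ} [Fact p.Prime] {Z : Set (Fin N → ℤ_[p])}
    (hZ : MeasurableSet Z) (y : Fin N → ℤ_[p]) (hfin : ∀ x, {t : ℤ_[p] | x + t • y ∈ Z}.Finite) :
    padicHaarPi p N Z = 0 := by
  have hcont : Continuous fun xt : (Fin N → ℤ_[p]) × ℤ_[p] => xt.1 + xt.2 • y := by fun_prop
  have hW : MeasurableSet ((fun xt : (Fin N → ℤ_[p]) × ℤ_[p] => xt.1 + xt.2 • y) ⁻¹' Z) :=
    hcont.measurable hZ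
  have h₁ := Measure.prod_apply (μ := padicHaarPi p N) (ν := padicHaar p) hW
  have h₂ := Measure.prod_apply_symm (μ := padicHaarPi p N) (ν := padicHaar p) hW
  have hslice : ∀ t : ℤ_[p], padicHaarPi p N ((fun x => (x, t)) ⁻¹'
      ((fun xt : (Fin N → ℤ_[p]) × ℤ_[p] => xt.1 + xt.2 • y) ⁻¹' Z)) = padicHaarPi p N Z :=
    fun t => measure_preimage_add_right (padicHaarPi p N) (t • y) Z
  have hslice' : ∀ x : Fin N → ℤ_[p], padicHaar p (Prod.mk x ⁻¹'
      ((fun xt : (Fin N → ℤ_[p]) × ℤ_[p] => xt.1 + xt.2 • y) ⁻¹' Z)) = 0 :=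
    fun x => (hfin x).measure_zero _
  rw [h₁] at h₂
  simpa [hslice, hslice'] using h₂.symm

theorem finite_setOf_det_add_smul_eq_zero {R : Type*} [CommRing R] [IsDomain R] {i : ℕ}
    (A B : Matrix (Fin i) (Fin i) R) (hB : B.det ≠ 0) : {t : R | (A + t • B).det = 0}.Finite := by
  set P : Polynomial R :=
    ((Polynomial.X : Polynomial R) • B.map Polynomial.C + A.map Polynomial.C).det with hP
  have hP0 : P ≠ 0 := fun h => hB <| by
    rw [← Polynomial.coeff_det_X_add_C_card B A, ← hP, h, Polynomial.coeff_zero]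
  refine (Polynomial.finite_setOfPred_isRoot hP0).subset fun t ht => ?_
  have heval : P.eval t = (A + t • B).det := by
    rw [hP, ← Polynomial.coe_evalRingHom, RingHom.map_det]
    congr 1
    ext a b
    simp [add_comm, mul_comm t]
  exact heval.trans ht

theorem measurable_minorNorm_comp {p rA rB rC : ℕ} [Fact p.Prime]
    (θ : (Fin rA → ℤ_[p]) →ₗ[ℤ_[p]] Matrix (Fin rC) (Fin rB) ℤ_[p]) (i : ℕ) :
    Measurable fun x => minorNorm (θ x) i := by
  refine Measurable.iSup fun ρ => Continuous.measurable ?_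
  exact ((LinearMap.continuous_on_pi θ).matrix_submatrix ρ.1 ρ.2).matrix_det.norm

theorem padicHaarPi_compl_minorNorm_ne_zero {p rA rB rC r : ℕ} [Fact p.Prime]
    (θ : (Fin rA → ℤ_[p]) →ₗ[ℤ_[p]] Matrix (Fin rC) (Fin rB) ℤ_[p])
    (hr' : ∃ x : Fin rA → ℤ_[p], minorNorm (θ x) r ≠ 0) :
    padicHaarPi p rA {x : Fin rA → ℤ_[p] | minorNorm (θ x) r ≠ 0}ᶜ = 0 := by
  obtain ⟨y, hy⟩ := hr'
  obtain ⟨f, g, hfg⟩ : ∃ f g, ((θ y).submatrix f g : Matrix (Fin r) (Fin r) ℤ_[p]).det ≠ 0 := by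
    by_contra! h
    refine hy (le_antisymm (minorNorm_le le_rfl fun f g => ?_) (minorNorm_nonneg _ _))
    rw [h f g, norm_zero]
  refine padicHaarPi_eq_zero_of_forall_finite ?_ y fun x => ?_
  · exact (measurableSet_eq_fun (measurable_minorNorm_comp θ r) measurable_const).compl.compl
  · refine (finite_setOf_det_add_smul_eq_zero ((θ x).submatrix f g) _ hfg).subset fun t ht => ?_
    have h0 : minorNorm (θ (x + t • y)) r = 0 := not_not.1 ht
    have := norm_le_zero_iff.1 ((norm_det_submatrix_le_minorNorm (θ (x + t • y)) f g).trans_eq h0)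
    rw [map_add, map_smul] at this
    exact this

theorem abs_minorNorm_term_le_one {p m n i : ℕ} [Fact p.Prime]
    {A : Matrix (Fin m) (Fin n) ℤ_[p]} (hi : minorNorm A i ≠ 0) {s : ℝ} (hs : 0 < s) :
    |((minorNorm A i / minorNorm A (i - 1)) ^ (s + i) -
      (minorNorm A (i + 1) / minorNorm A i) ^ (s + i)) / minorNorm A i| ≤ 1 := by
  obtain ⟨d, hd, hM, -⟩ := exists_antitone_minorNorm_eq_prod A
  have hpos : 0 < minorNorm A i := (minorNorm_nonneg A i).lt_of_ne' hi
  have hnext : minorNorm A (i + 1) / minorNorm A i = ‖d i‖ := by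
    rw [hM (i + 1), Finset.prod_range_succ, ← hM, mul_div_cancel_left₀ _ hi]
  have hprev : minorNorm A (i + 1) / minorNorm A i ≤ minorNorm A i / minorNorm A (i - 1) ∧
      (minorNorm A i / minorNorm A (i - 1)) ^ (s + i) ≤ minorNorm A i := by
    rw [hnext]
    cases i with
    | zero =>
      rw [Nat.zero_sub, div_self hi]
      refine ⟨PadicInt.norm_le_one _, ?_⟩
      rw [Real.one_rpow, hM, Finset.prod_range_zero]
    | succ i =>
      have hi' := minorNorm_ne_zero_of_le i.le_succ hi
      have hprev : minorNorm A (i + 1) / minorNorm A (i + 1 - 1) = ‖d i‖ := by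
        rw [Nat.add_sub_cancel, hM (i + 1), Finset.prod_range_succ, ← hM,
          mul_div_cancel_left₀ _ hi']
      rw [hprev]
      refine ⟨hd i.le_succ, ?_⟩
      calc ‖d i‖ ^ (s + (i + 1 : ℕ)) ≤ ‖d i‖ ^ ((i + 1 : ℕ) : ℝ) :=
            Real.rpow_le_rpow_of_exponent_ge' (norm_nonneg _) (PadicInt.norm_le_one _)
              (by positivity) (by linarith)
        _ = ∏ j ∈ Finset.range (i + 1), ‖d i‖ := by
            rw [Real.rpow_natCast, Finset.prod_const, Finset.card_range]
        _ ≤ minorNorm A (i + 1) := by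
            rw [hM]
            exact Finset.prod_le_prod (fun _ _ => norm_nonneg _) fun j hj =>
              hd (Nat.lt_succ_iff.1 (Finset.mem_range.1 hj))
  have hnn : 0 ≤ minorNorm A (i + 1) / minorNorm A i := by rw [hnext]; exact norm_nonneg _
  have hle := Real.rpow_le_rpow hnn hprev.1 (by positivity : 0 ≤ s + i)
  have hnn' : 0 ≤ (minorNorm A (i + 1) / minorNorm A i) ^ (s + i) := Real.rpow_nonneg hnn _
  rw [abs_of_nonneg (div_nonneg (sub_nonneg.2 hle) hpos.le), div_le_one hpos]
  linarith [hprev.2]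

/-- the closed formula for the ASK/Igusa zeta integral.  Let
`θ : ℤ_p^{r_A} → M_{r_C × r_B}(ℤ_p)` be `ℤ_p`-linear, `r` the maximal rank of `θ(x)`
over `ℚ_p`, and `U := {x : Δ_r(x) ≠ 0}`.  Then: on `U` every `Δ_i(x)` with `0 ≤ i ≤ r`
is nonzero; `U` has full Haar measure; and for every real `s > 0`,
`Z(s) := ∫ ‖θ(a)·b‖^s` equals
`1 − Σ_{i=0}^{r} [p^{−i}(1 − p^{−s})/(1 − p^{−(s+i)})] ·
  ∫_U ((‖Δ_i‖/‖Δ_{i−1}‖)^{s+i} − (‖Δ_{i+1}‖/‖Δ_i‖)^{s+i})·‖Δ_i‖⁻¹ dμ`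
(with `‖Δ_{−1}‖ = ‖Δ_0‖ = 1` and `‖Δ_{r+1}‖ = 0`; note that `‖Δ_0‖/‖Δ_{0-1}‖ = 1` and
that `minorNorm (θ x) (r+1) = 0`, so the natural-number indexing below realises these
conventions). -/
theorem igusa_zeta_formula (p : ℕ) [Fact p.Prime] (rA rB rC : ℕ)
    (hA : 1 ≤ rA) (hB : 1 ≤ rB) (hC : 1 ≤ rC)
    (θ : (Fin rA → ℤ_[p]) →ₗ[ℤ_[p]] Matrix (Fin rC) (Fin rB) ℤ_[p])
    (r : ℕ)
    (hr : ∀ x : Fin rA → ℤ_[p], minorNorm (θ x) (r + 1) = 0)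
    (hr' : ∃ x : Fin rA → ℤ_[p], minorNorm (θ x) r ≠ 0)
    (s : ℝ) (hs : 0 < s) :
    (∀ x ∈ {x : Fin rA → ℤ_[p] | minorNorm (θ x) r ≠ 0}, ∀ i ≤ r,
        minorNorm (θ x) i ≠ 0) ∧
    padicHaarPi p rA {x : Fin rA → ℤ_[p] | minorNorm (θ x) r ≠ 0}ᶜ = 0 ∧
    (∫ ab : (Fin rA → ℤ_[p]) × (Fin rB → ℤ_[p]),
        ‖(θ ab.1).mulVec ab.2‖ ^ s ∂((padicHaarPi p rA).prod (padicHaarPi p rB)))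
      = 1 - ∑ i ∈ Finset.range (r + 1),
          ((p : ℝ) ^ (-(i : ℤ)) * (1 - (p : ℝ) ^ (-s)) / (1 - (p : ℝ) ^ (-(s + i))))
            * ∫ x in {x : Fin rA → ℤ_[p] | minorNorm (θ x) r ≠ 0},
                ((minorNorm (θ x) i / minorNorm (θ x) (i - 1)) ^ (s + i)
                  - (minorNorm (θ x) (i + 1) / minorNorm (θ x) i) ^ (s + i))
                  / minorNorm (θ x) i ∂(padicHaarPi p rA) := by
  have hU_null := padicHaarPi_compl_minorNorm_ne_zero θ hr'
  refine ⟨fun x hx i hi => minorNorm_ne_zero_of_le hi hx, hU_null, ?_⟩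
  set U : Set (Fin rA → ℤ_[p]) := {x | minorNorm (θ x) r ≠ 0} with hU
  have hU_meas : MeasurableSet U :=
    (measurableSet_eq_fun (measurable_minorNorm_comp θ r) measurable_const).compl
  have hU_restrict : (padicHaarPi p rA).restrict U = padicHaarPi p rA :=
    Measure.restrict_eq_self_of_ae_mem (measure_eq_zero_iff_ae_notMem.1 hU_null |>.mono
      fun x hx => not_not.1 hx)
  have hU_ae : ∀ᵐ x ∂padicHaarPi p rA, x ∈ U := by
    rw [← hU_restrict]
    exact ae_restrict_mem hU_meas
  have hcont : Continuous fun ab : (Fin rA → ℤ_[p]) × (Fin rB → ℤ_[p]) =>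
      ‖(θ ab.1).mulVec ab.2‖ ^ s :=
    (((LinearMap.continuous_on_pi θ).comp continuous_fst).matrix_mulVec continuous_snd).norm
      |>.rpow_const fun _ => Or.inr hs.le
  have hT_int : ∀ i ∈ Finset.range (r + 1), Integrable (fun x =>
      ((minorNorm (θ x) i / minorNorm (θ x) (i - 1)) ^ (s + i)
        - (minorNorm (θ x) (i + 1) / minorNorm (θ x) i) ^ (s + i))
        / minorNorm (θ x) i) (padicHaarPi p rA) := fun i hi => by
    refine Integrable.of_bound (Measurable.aestronglyMeasurable ?_) 1 (hU_ae.mono fun x hx => ?_)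
    · have := measurable_minorNorm_comp θ
      exact ((((this i).div (this (i - 1))).pow_const _).sub
        (((this (i + 1)).div (this i)).pow_const _)).div (this i)
    · exact abs_minorNorm_term_le_one
        (minorNorm_ne_zero_of_le (Nat.lt_succ_iff.1 (Finset.mem_range.1 hi)) hx) hs
  rw [integral_prod _ (hcont.integrable_of_hasCompactSupport (HasCompactSupport.of_compactSpace _)),
    integral_congr_ae (hU_ae.mono fun x hx => integral_norm_mulVec_rpow hx (hr x) hs),
    integral_sub (integrable_const _)
      (integrable_finsetSum _ fun i hi => (hT_int i hi).const_mul _),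
    integral_finsetSum _ fun i hi => (hT_int i hi).const_mul _, integral_const, probReal_univ,
    one_smul, hU_restrict]
  simp only [integral_const_mul]
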